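/- arXiv:2407.06541 — 2 statements merged into one kernel-verified Lean document; each statement's English description precedes it below -/
import Mathlib

section
/- Let n ≥ 1 be a natural number, G ≥ 0 and θ real numbers with θ > n·G, and T a natural number. Let s, d : ℕ → (Fin n → ℝ^d) be sequences of families of vectors satisfying: (i) ‖s_i(T)‖ ≤ θ·T for all i; (ii) for every k ≥ T there is an n×n column stochastic matrix C(k) and vectors g_i(k) with ‖g_i(k)‖ ≤ G such that d_i(k+1) = Σ_{j=1}^n C(k)_{ij} · s_j(k) + g_i(k) for all i; and (iii) ‖s_i(k)‖ ≤ ‖d_i(k)‖ for all i and all k > T. Then for every natural number k with k > T·n·(θ − G)/(θ − n·G), it holds that Σ_{i=1}^n ‖d_i(k)‖ < θ·k; in particular ‖d_i(k)‖ < θ·k for every i, so d_i(k) lies in the ball {s ∈ ℝ^d : ‖s‖ ≤ θ·k} and the projection onto that ball leaves d_i(k) unchanged. -/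
/-!
Column stochasticity makes mixing by `C` nonexpansive for the total norm `∑ i, ‖·‖`, so each
update raises this total by at most `n * G`. Starting from at most `n * θ * T` at time `T`, and
using that passing from `dv` to `s` does not increase norms, the total at time `k > T` is at most
`n * θ * T + (k - T) * n * G`. The threshold on `k` is exactly where this drops below `θ * k`,
and it is at least `T` because `θ - n * G ≤ n * (θ - G)`.
-/

/-- One mixing step by a column stochastic matrix, followed by perturbations of norm at most `G`,
raises the total norm by at most `n * G`. -/
lemma sum_norm_mix_le {E : Type*} [NormedAddCommGroup E] [NormedSpace ℝ E] {n : ℕ} {G : ℝ}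
    (C : Matrix (Fin n) (Fin n) ℝ) (hC : ∀ i j, 0 ≤ C i j) (hC1 : ∀ j, ∑ i, C i j = 1)
    (x g : Fin n → E) (hg : ∀ i, ‖g i‖ ≤ G) :
    ∑ i, ‖(∑ j, C i j • x j) + g i‖ ≤ ∑ j, ‖x j‖ + n * G := by
  calc ∑ i, ‖(∑ j, C i j • x j) + g i‖
      ≤ ∑ i, ((∑ j, C i j * ‖x j‖) + G) := by
        refine Finset.sum_le_sum fun i _ => (norm_add_le _ _).trans (add_le_add ?_ (hg i))
        refine (norm_sum_le _ _).trans (Finset.sum_le_sum fun j _ => ?_)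
        rw [norm_smul, Real.norm_of_nonneg (hC i j)]
    _ = ∑ j, ‖x j‖ + n * G := by
        rw [Finset.sum_add_distrib, Finset.sum_comm]
        simp [← Finset.sum_mul, hC1]

/-- After time `T·n·(θ−G)/(θ−n·G)`, the candidate gradient-tracking updates
`d_i(k)` lie strictly inside the ball of radius `θ·k`, so projecting onto that
ball leaves them unchanged. -/
theorem rp3_projection_identity (n d : ℕ) (hn : 1 ≤ n)
    (G θ : ℝ) (hG : 0 ≤ G) (hθ : θ > (n : ℝ) * G)
    (T : ℕ)
    (s dv : ℕ → Fin n → EuclideanSpace ℝ (Fin d))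
    (hsT : ∀ i, ‖s T i‖ ≤ θ * T)
    (hrec : ∀ k, T ≤ k → ∃ C : Matrix (Fin n) (Fin n) ℝ,
      (∀ i j, 0 ≤ C i j) ∧ (∀ j, ∑ i, C i j = 1) ∧
      ∃ g : Fin n → EuclideanSpace ℝ (Fin d),
        (∀ i, ‖g i‖ ≤ G) ∧
        (∀ i, dv (k + 1) i = (∑ j, C i j • s k j) + g i))
    (hproj : ∀ k, T < k → ∀ i, ‖s k i‖ ≤ ‖dv k i‖) :
    ∀ k : ℕ, (k : ℝ) > (T : ℝ) * n * (θ - G) / (θ - n * G) →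
      (∑ i, ‖dv k i‖ < θ * k) ∧
      (∀ i, ‖dv k i‖ < θ * k) ∧
      (∀ i, dv k i ∈ Metric.closedBall (0 : EuclideanSpace ℝ (Fin d)) (θ * k)) := by
  have step : ∀ k, T ≤ k → ∑ i, ‖dv (k + 1) i‖ ≤ ∑ i, ‖s k i‖ + n * G := by
    intro k hk
    obtain ⟨C, hC, hC1, g, hg, hd⟩ := hrec k hk
    simp only [hd]
    exact sum_norm_mix_le C hC hC1 (s k) g hg
  have bound : ∀ m : ℕ,
      ∑ i, ‖dv (T + m + 1) i‖ ≤ n * (θ * T) + ((m : ℝ) + 1) * (n * G) := by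
    intro m
    induction m with
    | zero =>
      have h0 : ∑ i, ‖s T i‖ ≤ n * (θ * T) := by
        simpa using Finset.sum_le_sum (s := Finset.univ) fun i _ => hsT i
      have h1 := step T le_rfl
      push_cast
      simp only [add_zero]
      linarith
    | succ m ih =>
      have h1 := step (T + m + 1) (by omega)
      have h2 : ∑ i, ‖s (T + m + 1) i‖ ≤ ∑ i, ‖dv (T + m + 1) i‖ :=
        Finset.sum_le_sum fun i _ => hproj _ (by omega) i
      rw [← add_assoc]
      push_cast
      linarith
  intro k hk
  have hn' : (1 : ℝ) ≤ n := by exact_mod_cast hn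
  have hθ0 : 0 ≤ θ := le_trans (by positivity) hθ.le
  have hpos : 0 < θ - n * G := sub_pos.mpr hθ
  have hk' : (T : ℝ) * n * (θ - G) < k * (θ - n * G) := (div_lt_iff₀ hpos).mp hk
  have hTk : T < k := by
    have h1 : θ - n * G ≤ n * (θ - G) := by nlinarith
    have h2 : (T : ℝ) * (θ - n * G) ≤ T * (n * (θ - G)) :=
      mul_le_mul_of_nonneg_left h1 T.cast_nonneg
    have h3 : (T : ℝ) < k := lt_of_mul_lt_mul_right (by linarith) hpos.le
    exact_mod_cast h3
  have hsum : ∑ i, ‖dv k i‖ < θ * k := by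
    obtain ⟨m, rfl⟩ := Nat.exists_eq_add_of_lt hTk
    have hb := bound m
    push_cast at hk' ⊢
    linarith
  have hi : ∀ i, ‖dv k i‖ < θ * k := fun i =>
    (Finset.single_le_sum (f := fun i => ‖dv k i‖) (fun _ _ => norm_nonneg _)
      (Finset.mem_univ i)).trans_lt hsum
  exact ⟨hsum, hi, fun i => mem_closedBall_zero_iff.mpr (hi i).le⟩
end

section
/- Let n ≥ 1, let C be an n×n column stochastic matrix, let θ > 0 and A ≥ 0, and let s, g : ℕ → (Fin n → ℝ^d) satisfy s_i(0) = 0 for all i, ‖g_i(k)‖ ≤ A·exp(θ·k) for all i and k, and s_i(k+1) = Σ_{j=1}^n C_{ij} · s_j(k) + g_i(k) for all i and k. Then for every k ≥ 0: (a) Σ_{i=1}^n ‖s_i(k+1)‖ ≤ n·A·exp(θ·k) + Σ_{i=1}^n ‖s_i(k)‖, and (b) ‖s_i(k)‖ ≤ (n·A/(exp(θ) − 1))·exp(θ·k) for every agent i. -/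
/-!
Write `S k = ∑ i, ‖s k i‖`. Since `C` is nonnegative and its columns sum to one, mixing by `C`
does not increase the sum of the norms, so `S (k + 1) ≤ n A exp (θ k) + S k`. The constant
`B = n A / (exp θ - 1)` is chosen so that `B exp (θ k)` solves this recursion with equality:
`B exp (θ (k + 1)) = n A exp (θ k) + B exp (θ k)`. Hence `S k ≤ B exp (θ k)` by induction, and each
`‖s k i‖` is at most `S k`.
-/

/-- Nominal growth of the gradient-tracking variables when the gradients grow
like `A·exp(θ·k)` (unbounded constraint set case). -/
theorem rp3_s_growth_unbounded (n d : ℕ) (hn : 1 ≤ n)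
    (C : Matrix (Fin n) (Fin n) ℝ)
    (hC_nonneg : ∀ i j, 0 ≤ C i j) (hC_col : ∀ j, ∑ i, C i j = 1)
    (θ A : ℝ) (hθ : 0 < θ) (hA : 0 ≤ A)
    (s g : ℕ → Fin n → EuclideanSpace ℝ (Fin d))
    (hs0 : ∀ i, s 0 i = 0)
    (hg : ∀ k i, ‖g k i‖ ≤ A * Real.exp (θ * k))
    (hrec : ∀ k i, s (k + 1) i = (∑ j, C i j • s k j) + g k i) :
    ∀ k : ℕ,
      (∑ i, ‖s (k + 1) i‖ ≤ (n : ℝ) * A * Real.exp (θ * k) + ∑ i, ‖s k i‖) ∧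
      (∀ i, ‖s k i‖ ≤ ((n : ℝ) * A / (Real.exp θ - 1)) * Real.exp (θ * k)) := by
  have step : ∀ k : ℕ,
      ∑ i, ‖s (k + 1) i‖ ≤ (n : ℝ) * A * Real.exp (θ * k) + ∑ i, ‖s k i‖ := by
    intro k
    calc ∑ i, ‖s (k + 1) i‖
        ≤ ∑ i, ((∑ j, C i j * ‖s k j‖) + A * Real.exp (θ * k)) := by
          refine Finset.sum_le_sum fun i _ => ?_
          rw [hrec]
          refine (norm_add_le _ _).trans (add_le_add ?_ (hg k i))
          refine (norm_sum_le _ _).trans (Finset.sum_le_sum fun j _ => ?_)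
          rw [norm_smul, Real.norm_of_nonneg (hC_nonneg i j)]
      _ = (n : ℝ) * A * Real.exp (θ * k) + ∑ i, ‖s k i‖ := by
          -- Exchange the order of summation to use that the columns of `C` sum to one.
          rw [Finset.sum_add_distrib, Finset.sum_comm]
          simp only [← Finset.sum_mul, hC_col, one_mul, Finset.sum_const, Finset.card_univ,
            Fintype.card_fin, nsmul_eq_mul]
          ring
  have hpos : 0 < Real.exp θ - 1 := sub_pos.2 (Real.one_lt_exp_iff.2 hθ)
  have bound : ∀ k : ℕ,
      ∑ i, ‖s k i‖ ≤ ((n : ℝ) * A / (Real.exp θ - 1)) * Real.exp (θ * k) := by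
    intro k
    induction k with
    | zero =>
      simp only [hs0, norm_zero, Finset.sum_const_zero]
      positivity
    | succ k ih =>
      calc ∑ i, ‖s (k + 1) i‖
          ≤ (n : ℝ) * A * Real.exp (θ * k)
              + ((n : ℝ) * A / (Real.exp θ - 1)) * Real.exp (θ * k) :=
            (step k).trans (by gcongr)
        _ = ((n : ℝ) * A / (Real.exp θ - 1)) * Real.exp (θ * (k + 1 : ℕ)) := by
            push_cast
            rw [mul_add, mul_one, Real.exp_add]
            field_simp
            ring
  exact fun k => ⟨step k, fun i =>
    (Finset.single_le_sum (f := fun i => ‖s k i‖) (fun _ _ => norm_nonneg _)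
      (Finset.mem_univ i)).trans (bound k)⟩
end
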